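/- arXiv:2605.25612 — 4 statements merged into one kernel-verified Lean document; each statement's English description precedes it below -/
import Mathlib

section
/- Let σ : ℝ → ℝ be continuous at a point p ∈ ℝ and not differentiable at p, and let g : ℝ → ℝ be differentiable at σ(p). If the composition g ∘ σ is differentiable at p, then the derivative of g at σ(p) equals 0. -/
theorem hasLeftInverse_toSpanSingleton {𝕜 V : Type*} [Field 𝕜] [TopologicalSpace 𝕜]
    [IsTopologicalRing 𝕜] [AddCommGroup V] [TopologicalSpace V] [Module 𝕜 V] [ContinuousSMul 𝕜 V]
    [SeparatingDual 𝕜 V] {v : V} (hv : v ≠ 0) :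
    (ContinuousLinearMap.toSpanSingleton 𝕜 v).HasLeftInverse := by
  obtain ⟨φ, hφ⟩ := SeparatingDual.exists_eq_one (R := 𝕜) hv
  exact ⟨φ, fun c ↦ by simp [hφ]⟩

section Differentiability

variable {𝕜 E F G : Type*} [NontriviallyNormedField 𝕜]
  [NormedAddCommGroup E] [NormedSpace 𝕜 E]
  [NormedAddCommGroup F] [NormedSpace 𝕜 F]
  [NormedAddCommGroup G] [NormedSpace 𝕜 G]

theorem differentiableAt_of_comp_of_hasLeftInverse {σ : E → F} {g : F → G} {g' : F →L[𝕜] G} {p : E}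
    (hσ : ContinuousAt σ p) (hg : HasFDerivAt g g' (σ p)) (hg' : g'.HasLeftInverse)
    (hgσ : DifferentiableAt 𝕜 (g ∘ σ) p) : DifferentiableAt 𝕜 σ p :=
  (hg.of_comp_of_leftInverse hσ hgσ.hasFDerivAt .rfl
    hg'.leftInverse_leftInverse).differentiableAt

theorem stmt1_general [SeparatingDual 𝕜 F] {σ : E → 𝕜} {g : 𝕜 → F} {p : E}
    (hσ : ContinuousAt σ p) (hnd : ¬ DifferentiableAt 𝕜 σ p) (hg : DifferentiableAt 𝕜 g (σ p))
    (hgσ : DifferentiableAt 𝕜 (g ∘ σ) p) : deriv g (σ p) = 0 := by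
  by_contra hg'
  exact hnd <| differentiableAt_of_comp_of_hasLeftInverse hσ hg.hasDerivAt.hasFDerivAt
    (hasLeftInverse_toSpanSingleton hg') hgσ

end Differentiability

/-- If `σ` is continuous but not differentiable at `p`, `g` is differentiable
at `σ p`, and `g ∘ σ` is differentiable at `p`, then `deriv g (σ p) = 0`. -/
theorem stmt1 (σ g : ℝ → ℝ) (p : ℝ)
    (hcont : ContinuousAt σ p)
    (hnd : ¬ DifferentiableAt ℝ σ p)
    (hg : DifferentiableAt ℝ g (σ p))
    (hcomp : DifferentiableAt ℝ (g ∘ σ) p) :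
    deriv g (σ p) = 0 :=
  stmt1_general hcont hnd hg hcomp
end

section
/- Let N ≥ 1 and for each i ∈ [N] let f_i : ℝ^p → ℝ be twice continuously differentiable with f_i(θ) > 0 at a point θ, and set ℓ_i = −log f_i. Then the trace of the Hessian of the empirical loss L := (1/N) ∑_{i=1}^N ℓ_i at θ, plus (1/N) ∑_{i=1}^N (trace of the Hessian of f_i at θ)/f_i(θ), equals (1/N) ∑_{i=1}^N ‖∇ℓ_i(θ)‖₂². In the paper's terminology: the augmented flatness w.r.t. the parameters equals the expected squared gradient norm of the per-sample cross-entropy losses over the finite training set. -/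
/-- The trace of the Hessian of `g : ℝ^p → ℝ` at `θ`, computed as the sum over the standard
basis directions of the second iterated derivative evaluated twice in that direction. -/
noncomputable def trHess {p : ℕ} (g : EuclideanSpace ℝ (Fin p) → ℝ)
    (θ : EuclideanSpace ℝ (Fin p)) : ℝ :=
  ∑ j, iteratedFDeriv ℝ 2 g θ ![EuclideanSpace.single j 1, EuclideanSpace.single j 1]

/-!
The trace of the Hessian is the Laplacian, and the chain rule gives
`Δ (φ ∘ f) = φ' (f) Δ f + φ'' (f) ‖∇ f‖²`. For `φ = -log` one has `φ'' = φ' ^ 2`, so the last term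
is the squared norm of `∇ (φ ∘ f) = φ' (f) ∇ f`, while the first is `-Δ f / f`. The identity thus
holds sample by sample, and averaging uses only linearity of the Laplacian.
-/

section SecondDerivative

variable {𝕜 : Type*} [NontriviallyNormedField 𝕜]
  {E : Type*} [NormedAddCommGroup E] [NormedSpace 𝕜 E]
  {F : Type*} [NormedAddCommGroup F] [NormedSpace 𝕜 F]

theorem differentiableAt_fderiv_of_contDiffAt_two {h : E → F} {x : E}
    (hh : ContDiffAt 𝕜 2 h x) : DifferentiableAt 𝕜 (fderiv 𝕜 h) x :=
  (hh.fderiv_right (m := 1) (by norm_num)).differentiableAt one_ne_zero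

theorem hasFDerivAt_fderiv_apply_const {h : E → F} {x : E}
    (hh : DifferentiableAt 𝕜 (fderiv 𝕜 h) x) (v : E) :
    HasFDerivAt (fun y ↦ fderiv 𝕜 h y v) ((fderiv 𝕜 (fderiv 𝕜 h) x).flip v) x := by
  simpa using hh.hasFDerivAt.clm_apply (hasFDerivAt_const v x)

theorem iteratedFDeriv_two_comp_apply {g : E → 𝕜} {φ : 𝕜 → F} {x : E}
    (hφ : ContDiffAt 𝕜 2 φ (g x)) (hg : ContDiffAt 𝕜 2 g x) (u v : E) :
    iteratedFDeriv 𝕜 2 (φ ∘ g) x ![u, v] =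
      iteratedFDeriv 𝕜 2 g x ![u, v] • deriv φ (g x) +
        (fderiv 𝕜 g x u * fderiv 𝕜 g x v) • deriv (deriv φ) (g x) := by
  have first_derivative : (fun y ↦ fderiv 𝕜 (φ ∘ g) y v) =ᶠ[nhds x]
      fun y ↦ fderiv 𝕜 g y v • deriv φ (g y) := by
    filter_upwards [hg.eventually (by simp), hg.continuousAt.eventually (hφ.eventually (by simp))]
      with y hgy hφy
    rw [fderiv_comp y (hφy.differentiableAt two_ne_zero) (hgy.differentiableAt two_ne_zero),
      ContinuousLinearMap.comp_apply, fderiv_eq_smul_deriv]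
  have deriv_comp : HasFDerivAt (fun y ↦ deriv φ (g y))
      (fderiv 𝕜 (deriv φ) (g x) ∘L fderiv 𝕜 g x) x :=
    ((hφ.derivWithin (m := 1) (by norm_num)).differentiableAt one_ne_zero).hasFDerivAt.comp x
      (hg.differentiableAt two_ne_zero).hasFDerivAt
  have second_derivative : HasFDerivAt (fun y ↦ fderiv 𝕜 (φ ∘ g) y v)
      (fderiv 𝕜 g x v • (fderiv 𝕜 (deriv φ) (g x) ∘L fderiv 𝕜 g x) +
        ((fderiv 𝕜 (fderiv 𝕜 g) x).flip v).smulRight (deriv φ (g x))) x :=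
    ((hasFDerivAt_fderiv_apply_const (differentiableAt_fderiv_of_contDiffAt_two hg) v).fun_smul
      deriv_comp).congr_of_eventuallyEq first_derivative
  have hessian_eq := DFunLike.congr_fun ((hasFDerivAt_fderiv_apply_const
    (differentiableAt_fderiv_of_contDiffAt_two (hφ.comp x hg)) v).unique second_derivative) u
  simpa [iteratedFDeriv_two_apply, fderiv_eq_smul_deriv, mul_comm, smul_smul, add_comm] using
    hessian_eq

end SecondDerivative

section Gradient

variable {𝕜 : Type*} [RCLike 𝕜] {E : Type*} [NormedAddCommGroup E] [InnerProductSpace 𝕜 E]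
  [CompleteSpace E]

theorem hasGradientAt_comp {g : E → 𝕜} {φ : 𝕜 → 𝕜} {x g' : E} {φ' : 𝕜}
    (hφ : HasDerivAt φ φ' (g x)) (hg : HasGradientAt g g' x) :
    HasGradientAt (φ ∘ g) (starRingEnd 𝕜 φ' • g') x := by
  rw [hasGradientAt_iff_hasFDerivAt, map_smulₛₗ, RCLike.conj_conj]
  exact hφ.comp_hasFDerivAt x hg.hasFDerivAt

end Gradient

section Laplacian

open Gradient InnerProductSpace Laplacian Topology

variable {E : Type*} [NormedAddCommGroup E] [InnerProductSpace ℝ E] [FiniteDimensional ℝ E]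
  {F : Type*} [NormedAddCommGroup F] [NormedSpace ℝ F] {ι : Type*}

theorem sum_sq_fderiv_orthonormalBasis [Fintype ι] (b : OrthonormalBasis ι ℝ E) (g : E → ℝ)
    (x : E) : ∑ i, fderiv ℝ g x (b i) ^ 2 = ‖∇ g x‖ ^ 2 := by
  simp [← b.sum_sq_inner_right]

theorem trHess_eq_laplacian {p : ℕ} (g : EuclideanSpace ℝ (Fin p) → ℝ) : trHess g = Δ g := by
  rw [laplacian_eq_iteratedFDeriv_orthonormalBasis g (EuclideanSpace.basisFun (Fin p) ℝ)]
  simp only [EuclideanSpace.basisFun_apply]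
  rfl

theorem laplacian_comp {g : E → ℝ} {φ : ℝ → F} {x : E}
    (hφ : ContDiffAt ℝ 2 φ (g x)) (hg : ContDiffAt ℝ 2 g x) :
    Δ (φ ∘ g) x =
      Δ g x • deriv φ (g x) + ‖∇ g x‖ ^ 2 • deriv (deriv φ) (g x) := by
  simp only [laplacian_eq_iteratedFDeriv_stdOrthonormalBasis, iteratedFDeriv_two_comp_apply hφ hg,
    Finset.sum_add_distrib, ← Finset.sum_smul, ← pow_two, sum_sq_fderiv_orthonormalBasis]

theorem laplacian_fun_sum {s : Finset ι} {g : ι → E → F} {x : E}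
    (hg : ∀ i ∈ s, ContDiffAt ℝ 2 (g i) x) :
    Δ (fun y ↦ ∑ i ∈ s, g i y) x = ∑ i ∈ s, Δ (g i) x := by
  simp only [laplacian_eq_iteratedFDeriv_stdOrthonormalBasis,
    iteratedFDeriv_fun_sum_apply (n := 2) hg, sum_apply]
  exact Finset.sum_comm

theorem laplacian_neg_log {f : E → ℝ} {x : E} (hf : ContDiffAt ℝ 2 f x) (hx : f x ≠ 0) :
    Δ (fun y ↦ -Real.log (f y)) x =
      ‖∇ (fun y ↦ -Real.log (f y)) x‖ ^ 2 - Δ f x / f x := by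
  have gradient_eq : ∇ (fun y ↦ -Real.log (f y)) x = -(f x)⁻¹ • ∇ f x :=
    (hasGradientAt_comp (Real.hasDerivAt_log hx).fun_neg
      (hf.differentiableAt two_ne_zero).hasGradientAt).gradient
  have laplacian_eq : Δ (fun y ↦ -Real.log (f y)) x =
      Δ f x * -(f x)⁻¹ + ‖∇ f x‖ ^ 2 * (f x ^ 2)⁻¹ := by
    simpa [Function.comp_def] using laplacian_comp (Real.contDiffAt_log.2 hx).neg hf
  rw [gradient_eq, laplacian_eq, norm_smul, mul_pow, norm_neg, norm_inv, Real.norm_eq_abs, inv_pow,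
    sq_abs]
  ring

theorem stmt3_general (s : Finset ι) (w : ι → ℝ) (f ℓ : ι → E → ℝ) (θ : E)
    (hf : ∀ i ∈ s, ContDiffAt ℝ 2 (f i) θ) (hfθ : ∀ i ∈ s, 0 < f i θ)
    (hℓ : ∀ i ∈ s, ℓ i =ᶠ[𝓝 θ] fun x ↦ -Real.log (f i x)) :
    Δ (fun x ↦ ∑ i ∈ s, w i * ℓ i x) θ + ∑ i ∈ s, w i * (Δ (f i) θ / f i θ) =
      ∑ i ∈ s, w i * ‖∇ (ℓ i) θ‖ ^ 2 := by
  have contDiffAt_loss (i) (hi : i ∈ s) : ContDiffAt ℝ 2 (ℓ i) θ :=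
    ((hf i hi).log (hfθ i hi).ne').neg.congr_of_eventuallyEq (hℓ i hi)
  have laplacian_loss (i) (hi : i ∈ s) :
      Δ (ℓ i) θ = ‖∇ (ℓ i) θ‖ ^ 2 - Δ (f i) θ / f i θ := by
    rw [(laplacian_congr_nhds (hℓ i hi)).eq_of_nhds, (hℓ i hi).gradient_eq,
      laplacian_neg_log (hf i hi) (hfθ i hi).ne']
  have laplacian_risk : Δ (fun x ↦ ∑ i ∈ s, w i * ℓ i x) θ = ∑ i ∈ s, w i * Δ (ℓ i) θ := by
    rw [laplacian_fun_sum fun i hi ↦ contDiffAt_const.mul (contDiffAt_loss i hi)]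
    exact Finset.sum_congr rfl fun i hi ↦ laplacian_smul (w i) (contDiffAt_loss i hi)
  rw [laplacian_risk, ← Finset.sum_add_distrib]
  refine Finset.sum_congr rfl fun i hi ↦ ?_
  rw [laplacian_loss i hi]
  ring

end Laplacian

/-- For `N ≥ 1` twice continuously differentiable functions `f_i` positive
at `θ`, with per-sample losses `ℓ_i = -log f_i`, the augmented flatness
`tr ∇²((1/N) ∑ ℓ_i)(θ) + (1/N) ∑ tr(∇²f_i(θ))/f_i(θ)` equals the expected squared gradient
norm `(1/N) ∑ ‖∇ℓ_i(θ)‖²`. -/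
theorem stmt3 {p N : ℕ} (hN : 1 ≤ N)
    (f : Fin N → EuclideanSpace ℝ (Fin p) → ℝ)
    (hf : ∀ i, ContDiff ℝ 2 (f i))
    (θ : EuclideanSpace ℝ (Fin p)) (hfθ : ∀ i, 0 < f i θ)
    (ℓ : Fin N → EuclideanSpace ℝ (Fin p) → ℝ)
    (hℓ : ∀ i x, ℓ i x = -Real.log (f i x)) :
    trHess (fun x => (1 / N : ℝ) * ∑ i, ℓ i x) θ +
        (1 / N : ℝ) * ∑ i, trHess (f i) θ / f i θ =
      (1 / N : ℝ) * ∑ i, ‖gradient (ℓ i) θ‖ ^ 2 := by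
  simpa only [trHess_eq_laplacian, Finset.mul_sum] using
    stmt3_general Finset.univ (fun _ ↦ (1 / N : ℝ)) f ℓ θ (fun i _ ↦ (hf i).contDiffAt)
      (fun i _ ↦ hfθ i) fun i _ ↦ .of_forall (hℓ i)
end

section
/- Let f : ℝ^p → ℝ be twice continuously differentiable and fix θ ∈ ℝ^p. For σ > 0 let μ_σ be the uniform probability measure on the cube [−√3·σ, +√3·σ]^p. Then (1/σ²)·( ∫ f(θ + δ) dμ_σ(δ) − f(θ) ) converges, as σ → 0⁺, to (1/2)·tr(∇²f(θ)), the half-trace of the Hessian of f at θ. In particular, the expected increase of f under independent uniform coordinate-wise perturbations of standard deviation σ equals (σ²/2)·tr(∇²f(θ)) + o(σ²). -/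
open MeasureTheory Finset Filter

/-!
Integrate the second-order Taylor expansion of `f` at `θ` against a centred law with covariance
`σ² I`: the first-order term has mean zero, the second-order term has mean `(σ² / 2) tr (∇² f θ)`,
and, since the law lives on a ball of radius `O(σ)`, the `o(‖δ‖²)` remainder contributes `o(σ²)`.
The half-width `√3 σ` is the one for which the uniform law on an interval has variance `σ²`.
-/

section Taylor

open Asymptotics Topology

variable {E F : Type*} [NormedAddCommGroup E] [NormedSpace ℝ E]
  [NormedAddCommGroup F] [NormedSpace ℝ F]

theorem hasFDerivAt_half_apply_self {B : E →L[ℝ] E →L[ℝ] F}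
    (hB : ∀ v w, B v w = B w v) (x : E) :
    HasFDerivAt (fun h ↦ (1 / 2 : ℝ) • B h h) (B x) x := by
  refine ((B.hasFDerivAt.clm_apply (hasFDerivAt_id x)).const_smul (1 / 2 : ℝ)).congr_fderiv ?_
  ext v
  simp [hB v x, ← add_smul]
  norm_num

theorem isLittleO_taylor_two {f : E → F} {f' : E → E →L[ℝ] F} {f'' : E →L[ℝ] E →L[ℝ] F} {x : E}
    (hf : ∀ᶠ y in 𝓝 x, HasFDerivAt f (f' y) y) (hf' : HasFDerivAt f' f'' x) :
    (fun h ↦ f (x + h) - (f x + f' x h + (1 / 2 : ℝ) • f'' h h)) =o[𝓝 0] fun h ↦ ‖h‖ ^ 2 := by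
  have hsymm := second_derivative_symmetric_of_eventually hf hf'
  obtain ⟨r, hr, hball⟩ := Metric.eventually_nhds_iff_ball.1 hf
  have hderiv : ∀ h ∈ Metric.ball (0 : E) r,
      HasFDerivWithinAt (fun h ↦ f (x + h) - (f x + f' x h + (1 / 2 : ℝ) • f'' h h))
        (f' (x + h) - f' x - f'' h) (Metric.ball 0 r) h := fun h hh ↦ by
    have hxh : HasFDerivAt (fun h ↦ f (x + h)) (f' (x + h)) h :=
      (hasFDerivAt_comp_add_left x).2 (hball _ (by simpa using hh))
    have hquad := ((f' x).hasFDerivAt.const_add (f x)).add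
      (hasFDerivAt_half_apply_self hsymm h)
    exact ((hxh.sub hquad).congr_fderiv (sub_add_eq_sub_sub _ _ _)).hasFDerivWithinAt
  have hnhds : 𝓝[Metric.ball (0 : E) r] 0 = 𝓝 0 :=
    Metric.isOpen_ball.nhdsWithin_eq (Metric.mem_ball_self hr)
  have hlittle := (convex_ball (0 : E) r).isLittleO_pow_succ (n := 1) (Metric.mem_ball_self hr)
    hderiv (by simpa [hnhds] using (hasFDerivAt_iff_isLittleO_nhds_zero.1 hf').norm_right)
  simpa [hnhds] using hlittle

end Taylor

section Concentration

open Asymptotics Topology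

variable {E F : Type*} [NormedAddCommGroup E] [MeasurableSpace E]
  [NormedAddCommGroup F]

theorem integrable_of_ae_norm_le [OpensMeasurableSpace E] [ProperSpace E]
    {μ : Measure E} [IsFiniteMeasure μ] {r : ℝ} {g : E → F} (hμ : ∀ᵐ x ∂μ, ‖x‖ ≤ r)
    (hg : ContinuousOn g (Metric.closedBall 0 r)) : Integrable g μ := by
  have hrestrict : μ.restrict (Metric.closedBall 0 r) = μ :=
    Measure.restrict_eq_self_of_ae_mem (by simpa using hμ)
  rw [← hrestrict]
  exact hg.integrableOn_compact (isCompact_closedBall 0 r)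

theorem isLittleO_integral_of_ae_norm_le [NormedSpace ℝ F] {α : Type*} {l : Filter α}
    {μ : α → Measure E} {r : α → ℝ} {g : E → F} {n : ℕ} (hg : g =o[𝓝 0] fun x ↦ ‖x‖ ^ n)
    (hr : Tendsto r l (𝓝 0)) (hprob : ∀ᶠ a in l, IsProbabilityMeasure (μ a))
    (hμ : ∀ᶠ a in l, ∀ᵐ x ∂μ a, ‖x‖ ≤ r a) :
    (fun a ↦ ∫ x, g x ∂μ a) =o[l] fun a ↦ r a ^ n := by
  refine isLittleO_iff.2 fun c hc ↦ ?_
  obtain ⟨ρ, hρ, hball⟩ := Metric.eventually_nhds_iff.1 (hg.def hc)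
  filter_upwards [hprob, hμ, hr.eventually_lt_const hρ] with a _ hμa hra
  have hbound : ∀ᵐ x ∂μ a, ‖g x‖ ≤ c * ‖r a ^ n‖ := by
    filter_upwards [hμa] with x hx
    calc ‖g x‖ ≤ c * ‖‖x‖ ^ n‖ := hball (by simpa using hx.trans_lt hra)
      _ ≤ c * ‖r a ^ n‖ := by
        rw [norm_pow, norm_norm, norm_pow]
        gcongr
        exact hx.trans (le_abs_self _)
  simpa using norm_integral_le_of_norm_le_const hbound

end Concentration

/-- `IsIsotropicLaw C σ μ` says that `μ` is the law of a centred random vector in `ℝ^ι` whose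
coordinates are uncorrelated with standard deviation `|σ|`, and which is almost surely bounded by
`C * σ` in the sup norm. These are the perturbations for which the expected increase of a function
is governed by the trace of its Hessian. -/
structure IsIsotropicLaw {ι : Type*} [Fintype ι] [DecidableEq ι] (C σ : ℝ)
    (μ : Measure (ι → ℝ)) : Prop where
  isProbabilityMeasure : IsProbabilityMeasure μ
  ae_norm_le : ∀ᵐ δ ∂μ, ‖δ‖ ≤ C * σ
  integral_coord : ∀ i, ∫ δ, δ i ∂μ = 0
  integral_coord_mul_coord : ∀ i j, ∫ δ, δ i * δ j ∂μ = if i = j then σ ^ 2 else 0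

namespace IsIsotropicLaw

open Asymptotics Topology

variable {ι : Type*} [Fintype ι] [DecidableEq ι] {F : Type*} [NormedAddCommGroup F] {C σ : ℝ}
  {μ : Measure (ι → ℝ)}

theorem integrable (hμ : IsIsotropicLaw C σ μ) {g : (ι → ℝ) → F}
    (hg : ContinuousOn g (Metric.closedBall 0 (C * σ))) : Integrable g μ :=
  have := hμ.isProbabilityMeasure
  integrable_of_ae_norm_le hμ.ae_norm_le hg

variable [NormedSpace ℝ F] [CompleteSpace F]

theorem integral_clm (hμ : IsIsotropicLaw C σ μ) (A : (ι → ℝ) →L[ℝ] F) : ∫ δ, A δ ∂μ = 0 := by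
  have hmean : ∫ δ, δ ∂μ = 0 := by
    ext i
    have hint (j : ι) : Integrable (fun δ : ι → ℝ ↦ δ j) μ := hμ.integrable (by fun_prop)
    exact (eval_integral hint i).trans (hμ.integral_coord i)
  rw [A.integral_comp_comm (φ := fun δ ↦ δ) (hμ.integrable continuousOn_id), hmean, map_zero]

theorem integral_clm_apply_self (hμ : IsIsotropicLaw C σ μ)
    (B : (ι → ℝ) →L[ℝ] (ι → ℝ) →L[ℝ] F) :
    ∫ δ, B δ δ ∂μ = σ ^ 2 • ∑ i, B (Pi.single i 1) (Pi.single i 1) := by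
  have hexpand (δ : ι → ℝ) :
      B δ δ = ∑ i, ∑ j, (δ i * δ j) • B (Pi.single i 1) (Pi.single j 1) := by
    conv_lhs => rw [pi_eq_sum_univ' δ]
    simp only [map_sum, map_smul, _root_.sum_apply, smul_apply, Finset.smul_sum, smul_smul]
    exact Finset.sum_comm.trans (by simp only [mul_comm])
  have hterm (i j : ι) :
      Integrable (fun δ ↦ (δ i * δ j) • B (Pi.single i 1) (Pi.single j 1)) μ :=
    hμ.integrable (by fun_prop)
  rw [funext hexpand, integral_finsetSum _ fun i _ ↦ integrable_finsetSum _ fun j _ ↦ hterm i j]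
  simp_rw [integral_finsetSum _ fun j _ ↦ hterm _ j, integral_smul_const,
    hμ.integral_coord_mul_coord]
  simp [Finset.smul_sum]

theorem integral_quadratic (hμ : IsIsotropicLaw C σ μ) (c : F) (A : (ι → ℝ) →L[ℝ] F)
    (B : (ι → ℝ) →L[ℝ] (ι → ℝ) →L[ℝ] F) :
    ∫ δ, (c + A δ + (1 / 2 : ℝ) • B δ δ) ∂μ =
      c + (σ ^ 2 / 2) • ∑ i, B (Pi.single i 1) (Pi.single i 1) := by
  have := hμ.isProbabilityMeasure
  rw [integral_add (hμ.integrable (by fun_prop)) (hμ.integrable (by fun_prop)),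
    integral_add (hμ.integrable (by fun_prop)) (hμ.integrable (by fun_prop)), integral_smul,
    hμ.integral_clm, hμ.integral_clm_apply_self, smul_smul]
  simp [div_eq_inv_mul]

theorem isLittleO_integral_add_sub {α : Type*} {l : Filter α} {σ : α → ℝ}
    {μ : α → Measure (ι → ℝ)} (hσ : Tendsto σ l (𝓝 0))
    (hμ : ∀ᶠ a in l, IsIsotropicLaw C (σ a) (μ a)) {f : (ι → ℝ) → F}
    {f' : (ι → ℝ) → (ι → ℝ) →L[ℝ] F} {f'' : (ι → ℝ) →L[ℝ] (ι → ℝ) →L[ℝ] F} {θ : ι → ℝ}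
    (hf : ∀ᶠ x in 𝓝 θ, HasFDerivAt f (f' x) x) (hf' : HasFDerivAt f' f'' θ) :
    (fun a ↦ ∫ δ, f (θ + δ) ∂μ a - f θ -
        (σ a ^ 2 / 2) • ∑ i, f'' (Pi.single i 1) (Pi.single i 1)) =o[l] fun a ↦ σ a ^ 2 := by
  have hradius : Tendsto (fun a ↦ C * σ a) l (𝓝 0) := by simpa using hσ.const_mul C
  obtain ⟨r, hr, hball⟩ := Metric.eventually_nhds_iff_ball.1 hf
  have hremainder := isLittleO_integral_of_ae_norm_le (isLittleO_taylor_two hf hf') hradius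
    (hμ.mono fun _ h ↦ h.isProbabilityMeasure) (hμ.mono fun _ h ↦ h.ae_norm_le)
  have hscale : (fun a ↦ (C * σ a) ^ 2) =O[l] fun a ↦ σ a ^ 2 := by
    simpa only [mul_pow] using isBigO_const_mul_self (C ^ 2) (fun a ↦ σ a ^ 2) l
  refine (hremainder.trans_isBigO hscale).congr' ?_ .rfl
  filter_upwards [hμ, hradius.eventually_lt_const hr] with a hμa hra
  have hcont : ContinuousOn (fun δ ↦ f (θ + δ)) (Metric.closedBall 0 (C * σ a)) := by
    intro δ hδ
    have hmem : θ + δ ∈ Metric.ball θ r := by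
      simpa using (mem_closedBall_zero_iff.1 hδ).trans_lt hra
    exact ((hball _ hmem).continuousAt.comp (by fun_prop)).continuousWithinAt
  rw [integral_sub (hμa.integrable hcont) (hμa.integrable (by fun_prop)), hμa.integral_quadratic,
    sub_add_eq_sub_sub]

end IsIsotropicLaw

section Uniform

open ProbabilityTheory

theorem integral_cond_Icc {E : Type*} [NormedAddCommGroup E] [NormedSpace ℝ E] {a b : ℝ}
    (hab : a ≤ b) (g : ℝ → E) :
    ∫ x, g x ∂volume[|Set.Icc a b] = (b - a)⁻¹ • ∫ x in a..b, g x := by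
  rw [ProbabilityTheory.cond, integral_smul_measure, Real.volume_Icc, ENNReal.toReal_inv,
    ENNReal.toReal_ofReal (sub_nonneg.2 hab), integral_Icc_eq_integral_Ioc,
    intervalIntegral.integral_of_le hab]

theorem integral_id_cond_Icc {a b : ℝ} (hab : a < b) :
    ∫ x, x ∂volume[|Set.Icc a b] = (a + b) / 2 := by
  have : b - a ≠ 0 := sub_ne_zero.2 hab.ne'
  rw [integral_cond_Icc hab.le, integral_id, smul_eq_mul]
  field_simp
  ring

theorem integral_sq_cond_Icc {a b : ℝ} (hab : a < b) :
    ∫ x, x ^ 2 ∂volume[|Set.Icc a b] = (a ^ 2 + a * b + b ^ 2) / 3 := by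
  have : b - a ≠ 0 := sub_ne_zero.2 hab.ne'
  rw [integral_cond_Icc hab.le, integral_pow, smul_eq_mul]
  norm_num
  field_simp
  ring

theorem isProbabilityMeasure_cond_Icc {a b : ℝ} (hab : a < b) :
    IsProbabilityMeasure volume[|Set.Icc a b] :=
  cond_isProbabilityMeasure_of_finite (by simpa using hab) measure_Icc_lt_top.ne

end Uniform

namespace IsIsotropicLaw

open ProbabilityTheory

variable {ι : Type*} [Fintype ι] [DecidableEq ι] {σ : ℝ}

theorem pi {C : ℝ} (hC : 0 ≤ C * σ) {ν : ι → Measure ℝ} [∀ i, IsProbabilityMeasure (ν i)]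
    (hbound : ∀ i, ∀ᵐ x ∂ν i, |x| ≤ C * σ) (hmean : ∀ i, ∫ x, x ∂ν i = 0)
    (hvar : ∀ i, ∫ x, x ^ 2 ∂ν i = σ ^ 2) : IsIsotropicLaw C σ (Measure.pi ν) where
  isProbabilityMeasure := inferInstance
  ae_norm_le := by
    have hcoord : ∀ᵐ δ ∂Measure.pi ν, ∀ i, |δ i| ≤ C * σ :=
      ae_all_iff.2 fun i ↦ Measure.tendsto_eval_ae_ae.eventually (hbound i)
    filter_upwards [hcoord] with δ hδ
    exact (pi_norm_le_iff_of_nonneg hC).2 hδ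
  integral_coord i := integral_eval.trans (hmean i)
  integral_coord_mul_coord i j := by
    split_ifs with hij
    · subst hij
      simp_rw [← sq]
      have hsq : AEStronglyMeasurable (fun x : ℝ ↦ x ^ 2) (ν i) := by fun_prop
      exact (integral_comp_eval hsq).trans (hvar i)
    · have hindep := (iIndepFun_pi (μ := ν) (X := fun _ x ↦ x) fun _ ↦ aemeasurable_id).indepFun hij
      rw [hindep.integral_fun_mul_eq_mul_integral
        (measurable_pi_apply i).aestronglyMeasurable (measurable_pi_apply j).aestronglyMeasurable,
        integral_eval, hmean, zero_mul]

theorem pi_cond_Icc (hσ : 0 < σ) :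
    IsIsotropicLaw √3 σ (Measure.pi fun _ : ι ↦ volume[|Set.Icc (-(√3 * σ)) (√3 * σ)]) := by
  have hpos : 0 < √3 * σ := by positivity
  have hlt : -(√3 * σ) < √3 * σ := neg_lt_self hpos
  have := isProbabilityMeasure_cond_Icc hlt
  refine pi hpos.le (fun _ ↦ ?_) (fun _ ↦ ?_) fun _ ↦ ?_
  · exact (ae_cond_mem measurableSet_Icc).mono fun x hx ↦ abs_le.2 hx
  · rw [integral_id_cond_Icc hlt, neg_add_cancel, zero_div]
  · rw [integral_sq_cond_Icc hlt]
    linear_combination (σ ^ 2 / 3) * Real.sq_sqrt (show (0 : ℝ) ≤ 3 by norm_num)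

end IsIsotropicLaw

open Topology in
theorem stmt11_general {ι : Type*} [Fintype ι] [DecidableEq ι] {F : Type*} [NormedAddCommGroup F]
    [NormedSpace ℝ F] [CompleteSpace F] {f : (ι → ℝ) → F} {θ : ι → ℝ}
    (hf : ∀ᶠ x in 𝓝 θ, DifferentiableAt ℝ f x) (hf' : DifferentiableAt ℝ (fderiv ℝ f) θ)
    {C : ℝ} {μ : ℝ → Measure (ι → ℝ)} (hμ : ∀ᶠ s in 𝓝[>] 0, IsIsotropicLaw C s (μ s)) :
    Tendsto (fun s : ℝ ↦ (1 / s ^ 2) • (∫ δ, f (θ + δ) ∂μ s - f θ)) (𝓝[>] 0)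
      (𝓝 ((1 / 2 : ℝ) • ∑ i, iteratedFDeriv ℝ 2 f θ ![Pi.single i 1, Pi.single i 1])) := by
  have hscale : Tendsto id (𝓝[>] (0 : ℝ)) (𝓝 0) := nhdsWithin_le_nhds
  have herror := (IsIsotropicLaw.isLittleO_integral_add_sub hscale hμ
    (hf.mono fun _ h ↦ h.hasFDerivAt) hf'.hasFDerivAt).tendsto_inv_smul_nhds_zero
  simp only [iteratedFDeriv_two_apply, Matrix.cons_val_zero, Matrix.cons_val_one]
  refine tendsto_sub_nhds_zero_iff.1 (herror.congr' ?_)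
  filter_upwards [self_mem_nhdsWithin] with s hs
  have hs_ne : s ≠ 0 := (Set.mem_Ioi.1 hs).ne'
  rw [id_eq, smul_sub _ (_ - _), smul_smul, one_div]
  congr 2
  field_simp

/-- For `f : ℝ^p → ℝ` twice continuously differentiable and `μ_σ` the
uniform probability measure on the cube `[−√3·σ, +√3·σ]^p`, the quantity
`(1/σ²)(∫ f(θ+δ) dμ_σ(δ) − f(θ))` converges, as `σ → 0⁺`, to half the trace of the Hessian
of `f` at `θ`. -/
theorem stmt11 {p : ℕ} (f : (Fin p → ℝ) → ℝ) (hf : ContDiff ℝ 2 f)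
    (θ : Fin p → ℝ)
    (μ : ℝ → Measure (Fin p → ℝ))
    (hμ : ∀ s : ℝ, μ s = Measure.pi fun _ =>
      (volume (Set.Icc (-(Real.sqrt 3 * s)) (Real.sqrt 3 * s)))⁻¹ •
        volume.restrict (Set.Icc (-(Real.sqrt 3 * s)) (Real.sqrt 3 * s))) :
    Tendsto (fun s : ℝ => (1 / s ^ 2) * ((∫ δ, f (θ + δ) ∂(μ s)) - f θ))
      (nhdsWithin 0 (Set.Ioi 0))
      (nhds ((1 / 2 : ℝ) *
        ∑ i, iteratedFDeriv ℝ 2 f θ ![Pi.single i 1, Pi.single i 1])) :=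
  stmt11_general (.of_forall (hf.differentiable two_ne_zero))
    ((hf.fderiv_right le_rfl).differentiable one_ne_zero θ)
    (eventually_mem_nhdsWithin.mono fun s hs ↦ (hμ s).symm ▸ IsIsotropicLaw.pi_cond_Icc hs)
end

section
/- Let σ : ℝ → ℝ be a jumping activation function. Define the zero-assigned derivative d_σ : ℝ → ℝ by d_σ(x) = σ'(x) if σ is differentiable at x and d_σ(x) = 0 otherwise. Then for every x ∈ ℝ, σ(x) = 0 if and only if d_σ(x) = 0. Consequently, for any real matrix P, the activation matrix A with entries σ(P_{i,j}) and the derivative matrix D with entries d_σ(P_{i,j}) satisfy ‖A‖₀ = ‖D‖₀, i.e. activation sparsity equals derivative sparsity. -/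
open Finset

/-- A jumping activation function: zero on `(-∞, 0]`, positive on `(0, ∞)`, continuous,
twice continuously differentiable on `(-∞, 0)` and on `(0, ∞)`, with `|σ'(x)| ≥ 1` for
`x > 0` and `σ'(x) = 0` for `x < 0`. -/
def IsJumping (σ : ℝ → ℝ) : Prop :=
  (∀ x ≤ 0, σ x = 0) ∧ (∀ x > 0, 0 < σ x) ∧ Continuous σ ∧
    ContDiffOn ℝ 2 σ (Set.Iio 0) ∧ ContDiffOn ℝ 2 σ (Set.Ioi 0) ∧
    (∀ x > 0, 1 ≤ |deriv σ x|) ∧ (∀ x < 0, deriv σ x = 0)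

open Classical in
/-- The zero-assigned derivative of `σ`: `σ'(x)` where `σ` is differentiable, `0` elsewhere. -/
noncomputable def zeroAssignedDeriv (σ : ℝ → ℝ) : ℝ → ℝ := fun x =>
  if DifferentiableAt ℝ σ x then deriv σ x else 0

/-! A zero of a nonnegative function is a minimum, so by Fermat's theorem the derivative there is
zero if it exists. This treats `x < 0` and the possible kink at `x = 0` alike, without computing
one-sided derivatives. -/

theorem zeroAssignedDeriv_eq_deriv (σ : ℝ → ℝ) : zeroAssignedDeriv σ = deriv σ := by
  funext x
  unfold zeroAssignedDeriv
  split_ifs with hdiff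
  · rfl
  · exact (deriv_zero_of_not_differentiableAt hdiff).symm

theorem deriv_eq_zero_of_eventually_nonneg {f : ℝ → ℝ} {x : ℝ} (hf : ∀ᶠ y in nhds x, 0 ≤ f y)
    (hx : f x = 0) : deriv f x = 0 :=
  have hmin : IsLocalMin f x := hf.mono fun _ hy => hx.trans_le hy
  hmin.deriv_eq_zero

namespace IsJumping

variable {σ : ℝ → ℝ}

theorem nonneg (hσ : IsJumping σ) (x : ℝ) : 0 ≤ σ x := by
  obtain ⟨hzero, hpos, -⟩ := hσ
  rcases le_or_gt x 0 with hx | hx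
  · exact (hzero x hx).ge
  · exact (hpos x hx).le

theorem deriv_ne_zero (hσ : IsJumping σ) {x : ℝ} (hx : σ x ≠ 0) : deriv σ x ≠ 0 := by
  obtain ⟨hzero, -, -, -, -, hderiv, -⟩ := hσ
  have hx_pos : 0 < x := not_le.1 fun hle => hx (hzero x hle)
  exact abs_pos.1 (one_pos.trans_le (hderiv x hx_pos))

end IsJumping

theorem stmt12_general {σ : ℝ → ℝ} (hnonneg : ∀ x, 0 ≤ σ x)
    (hderiv : ∀ x, σ x ≠ 0 → deriv σ x ≠ 0) :
    (∀ x, σ x = 0 ↔ zeroAssignedDeriv σ x = 0) ∧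
      ∀ (ι : Type*) [Fintype ι] (p : ι → ℝ),
        #{i | σ (p i) ≠ 0} = #{i | zeroAssignedDeriv σ (p i) ≠ 0} := by
  have hiff (x : ℝ) : σ x = 0 ↔ zeroAssignedDeriv σ x = 0 := by
    rw [zeroAssignedDeriv_eq_deriv]
    exact ⟨deriv_eq_zero_of_eventually_nonneg (.of_forall hnonneg), not_imp_not.1 (hderiv x)⟩
  exact ⟨hiff, fun _ _ p => congrArg card (filter_congr fun i _ => (hiff (p i)).not)⟩

/-- For a jumping activation `σ` with zero-assigned derivative `d_σ`,
`σ(x) = 0 ↔ d_σ(x) = 0` for every `x`; consequently, for any matrix `P`, the activation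
matrix `σ(P)` and the derivative matrix `d_σ(P)` have the same number of nonzero entries
(activation sparsity equals derivative sparsity). -/
theorem stmt12 (σ : ℝ → ℝ) (hσ : IsJumping σ) :
    (∀ x : ℝ, σ x = 0 ↔ zeroAssignedDeriv σ x = 0) ∧
      ∀ (k m : ℕ) (P : Fin k → Fin m → ℝ),
        ((Finset.univ : Finset (Fin k × Fin m)).filter
            fun q => σ (P q.1 q.2) ≠ 0).card =
          ((Finset.univ : Finset (Fin k × Fin m)).filter
            fun q => zeroAssignedDeriv σ (P q.1 q.2) ≠ 0).card := by
  obtain ⟨hiff, hcard⟩ := stmt12_general hσ.nonneg fun _ => hσ.deriv_ne_zero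
  exact ⟨hiff, fun k m P => hcard (Fin k × Fin m) fun q => P q.1 q.2⟩
end
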